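/- arXiv:2108.02692 — 4 statements merged into one kernel-verified Lean document; each statement's English description precedes it below -/
import Mathlib

section
/- Let G be a finite simple graph with node set N, let a ∈ N, and let Q be a MultiSLP equivalent to P_G satisfying: (i) every temporal variable of Q whose value is e_x + e_y for two constants x, y is defined by the statement v ← x ⊕ y, and every temporal variable whose value is e_x + e_y + e_z for three constants is defined by v ← x ⊕ y ⊕ z; and (ii) the defining statement of every goal variable either has exactly two arguments or is of the form g ← ρ ⊕ x ⊕ y with constants x, y. Suppose Q contains no variable Γ_a (i.e., no temporal variable with value e_ρ + e_a). Then for the local node λ_a, at least one of the following holds: the goal g_{aλ_a} is defined by the statement g_{aλ_a} ← ρ ⊕ a ⊕ λ_a, or the constant λ_a freely appears in Q; and the same holds for μ_a. -/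
/-- Terms of a MultiSLP over a set of constants `C`:
either a constant, or a variable referenced by its statement index. -/
inductive Term (C : Type) where
  | const : C → Term C
  | var : ℕ → Term C
  deriving DecidableEq

/-- A MultiSLP over the constants `C`: a sequence of statements
`v_i ← ⊕(t_{i,1},…,t_{i,n_i})` (statement `i` defines variable `i`, each `n_i ≥ 2`,
and every variable used in statement `i` has index `< i`), followed by a return
list of terms whose variables are all defined. -/
structure MultiSLP (C : Type) where
  stmts : List (List (Term C))
  ret : List (Term C)
  arity : ∀ args ∈ stmts, 2 ≤ args.length
  wfStmts : ∀ i, i < stmts.length → ∀ t ∈ stmts.getD i [], ∀ j, t = Term.var j → j < i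
  wfRet : ∀ t ∈ ret, ∀ j, t = Term.var j → j < stmts.length

/-- The value of a constant `c` is the standard basis vector `e_c` of `GF(2)^C`. -/
def eConst {C : Type} [DecidableEq C] (c : C) : C → ZMod 2 := fun d => if d = c then 1 else 0

/-- Value of a term, given the list of values of the previously defined variables. -/
def Term.eval {C : Type} [DecidableEq C] (env : List (C → ZMod 2)) : Term C → (C → ZMod 2)
  | .const c => eConst c
  | .var j => env.getD j 0

/-- Values of the variables of a MultiSLP: the value of variable `i` is the GF(2)-sum
(XOR) of the values of the arguments of statement `i`. -/
def MultiSLP.envList {C : Type} [DecidableEq C] (P : MultiSLP C) : List (C → ZMod 2) :=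
  P.stmts.foldl (fun env args => env ++ [(args.map (Term.eval env)).sum]) []

/-- The result of a MultiSLP: the tuple of values of its returned terms. -/
def MultiSLP.result {C : Type} [DecidableEq C] (P : MultiSLP C) : List (C → ZMod 2) :=
  P.ret.map (Term.eval P.envList)

/-- The value of variable `i` of a MultiSLP. -/
def MultiSLP.value {C : Type} [DecidableEq C] (P : MultiSLP C) (i : ℕ) : C → ZMod 2 :=
  P.envList.getD i 0

/-- The memory-access cost `#_M(P) = Σ_i (n_i + 1)`. -/
def MultiSLP.costM {C : Type} (P : MultiSLP C) : ℕ :=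
  (P.stmts.map fun args => args.length + 1).sum
/-- The constants used by `P_G`: the fresh constant `ρ`, the nodes of `G`,
and for each node `a` the fresh local nodes `λ_a` and `μ_a`. -/
inductive Const (N : Type) where
  | rho : Const N
  | node : N → Const N
  | lam : N → Const N
  | mu : N → Const N
  deriving DecidableEq

/-- The result of `P_G`: the family of values `e_ρ + e_x + e_y` indexed by the
edges of `G_modif` (first the edges of `G`, enumerated by the list `L`, then for
each node `a` — enumerated by `nodes` — the two local edges `(a,λ_a)` and `(a,μ_a)`).
A MultiSLP `Q` is equivalent to `P_G` iff `Q.result = targetValues L nodes`. -/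
def targetValues {N : Type} [DecidableEq N] (L : List (N × N)) (nodes : List N) :
    List (Const N → ZMod 2) :=
  (L.map fun p =>
    eConst Const.rho + eConst (Const.node p.1) + eConst (Const.node p.2))
  ++ nodes.flatMap fun a =>
      [eConst Const.rho + eConst (Const.node a) + eConst (Const.lam a),
       eConst Const.rho + eConst (Const.node a) + eConst (Const.mu a)]

/-- A constant `c` *freely appears* in `Q` if it occurs as an argument of the defining
statement of some temporal (non-returned) variable of `Q`. -/
def FreeConst {C : Type} (Q : MultiSLP C) (c : C) : Prop :=
  ∃ k, k < Q.stmts.length ∧ Term.var k ∉ Q.ret ∧ Term.const c ∈ Q.stmts.getD k []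

/-!
Suppose `λ_a` does not freely appear. Following arguments backwards from `g_{aλ_a}`, one reaches a
variable that involves `λ_a` and has `λ_a` among its arguments; it is not temporal, so it is a goal,
and `g_{aλ_a}` is the only goal involving `λ_a`. If its statement had exactly two arguments, the
other one would have value `e_ρ + e_a`. It is not a temporal variable, as there is no `Γ_a`, and it
is neither a constant nor a goal, since a sum of two basis vectors is never a basis vector. So
`g_{aλ_a} ← ρ ⊕ x ⊕ y`, and `e_x + e_y = e_a + e_{λ_a}` determines `{x, y}`.
-/

section Values

theorem MultiSLP.lt_of_var_mem_stmts {C : Type} {Q : MultiSLP C} {i j : ℕ}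
    (h : Term.var j ∈ Q.stmts.getD i []) : j < i := by
  by_cases hi : i < Q.stmts.length
  · exact Q.wfStmts i hi _ h j rfl
  · rw [List.getD_eq_default _ _ (not_lt.1 hi)] at h
    exact absurd h List.not_mem_nil

variable {C : Type} [DecidableEq C]

theorem eConst_apply_ne_zero_iff {c d : C} : eConst d c ≠ 0 ↔ c = d := by
  simp [eConst]

theorem eConst_add_eConst_ne_eConst (x y z : C) : eConst x + eConst y ≠ eConst z := by
  intro h
  have hx := congrFun h x
  have hy := congrFun h y
  have hz := congrFun h z
  simp only [Pi.add_apply, eConst] at hx hy hz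
  grind

theorem perm_pair_of_eConst_add_eq {x y u v : C} (huv : u ≠ v)
    (h : eConst x + eConst y = eConst u + eConst v) : [x, y].Perm [u, v] := by
  have hu := congrFun h u
  have hv := congrFun h v
  simp only [Pi.add_apply, eConst] at hu hv
  have : x = u ∧ y = v ∨ x = v ∧ y = u := by grind
  obtain ⟨rfl, rfl⟩ | ⟨rfl, rfl⟩ := this
  · exact .refl _
  · exact .swap _ _ _

theorem Term.eval_append (env env' : List (C → ZMod 2)) {t : Term C}
    (h : ∀ j, t = .var j → j < env.length) : t.eval (env ++ env') = t.eval env := by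
  cases t with
  | const c => rfl
  | var j => exact List.getD_append _ _ _ _ (h j rfl)

namespace MultiSLP

/-- One evaluation step of a MultiSLP, the step folded in `MultiSLP.envList`: the values `env` of
the variables defined so far are extended by that of a new variable with arguments `args`. -/
def extendEnv (env : List (C → ZMod 2)) (args : List (Term C)) : List (C → ZMod 2) :=
  env ++ [(args.map (Term.eval env)).sum]

theorem length_foldl_extendEnv (stmts : List (List (Term C))) (env : List (C → ZMod 2)) :
    (stmts.foldl extendEnv env).length = env.length + stmts.length := by
  induction stmts generalizing env with
  | nil => rfl
  | cons args stmts ih => simp [ih, extendEnv, add_assoc, add_comm 1]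

theorem prefix_foldl_extendEnv (stmts : List (List (Term C))) (env : List (C → ZMod 2)) :
    env <+: stmts.foldl extendEnv env := by
  induction stmts generalizing env with
  | nil => exact List.prefix_rfl
  | cons args stmts ih => exact (List.prefix_append _ _).trans (ih _)

theorem value_eq_sum (Q : MultiSLP C) (i : ℕ) :
    Q.value i = ((Q.stmts.getD i []).map (Term.eval Q.envList)).sum := by
  have envList_eq : Q.envList = Q.stmts.foldl extendEnv [] := rfl
  by_cases hi : i < Q.stmts.length
  · set env := (Q.stmts.take i).foldl extendEnv [] with henv
    have length_env : env.length = i := by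
      simp [henv, length_foldl_extendEnv, hi.le]
    have hprefix : extendEnv env (Q.stmts.getD i []) <+: Q.envList := by
      have foldl_eq : Q.envList = (Q.stmts.drop i).foldl extendEnv env := by
        rw [envList_eq, henv, ← List.foldl_append, List.take_append_drop]
      rw [foldl_eq, List.drop_eq_getElem_cons hi, List.getD_eq_getElem _ _ hi]
      exact prefix_foldl_extendEnv _ _
    obtain ⟨rest, hrest⟩ := hprefix
    have eval_eq : ∀ t ∈ Q.stmts.getD i [], t.eval Q.envList = t.eval env := by
      intro t ht
      rw [← hrest, extendEnv, List.append_assoc]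
      refine Term.eval_append _ _ fun j hj => ?_
      exact length_env.symm ▸ lt_of_var_mem_stmts (hj ▸ ht)
    rw [List.map_congr_left eval_eq, value, ← hrest]
    simp [extendEnv, length_env]
  · have hi' := not_lt.1 hi
    rw [value, envList_eq, List.getD_eq_default _ _ (by simpa [length_foldl_extendEnv] using hi'),
      List.getD_eq_default _ _ hi', List.map_nil, List.sum_nil]

variable {Q : MultiSLP C}

theorem value_mem_result {i : ℕ} (h : Term.var i ∈ Q.ret) : Q.value i ∈ Q.result :=
  List.mem_map_of_mem (f := Term.eval Q.envList) h

theorem exists_arg_eval_ne_zero {i : ℕ} {c : C} (h : Q.value i c ≠ 0) :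
    ∃ t ∈ Q.stmts.getD i [], t.eval Q.envList c ≠ 0 := by
  rw [value_eq_sum, Pi.list_sum_apply] at h
  obtain ⟨z, hz, hz_ne⟩ := List.exists_mem_ne_zero_of_sum_ne_zero h
  simp only [List.map_map, List.mem_map] at hz
  obtain ⟨t, ht, rfl⟩ := hz
  exact ⟨t, ht, hz_ne⟩

theorem exists_le_const_mem_stmts {i : ℕ} {c : C} (h : Q.value i c ≠ 0) :
    ∃ k ≤ i, Q.value k c ≠ 0 ∧ Term.const c ∈ Q.stmts.getD k [] := by
  induction i using Nat.strong_induction_on with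
  | h i ih =>
    obtain ⟨t, ht, htc⟩ := exists_arg_eval_ne_zero h
    cases t with
    | const d =>
      obtain rfl := eConst_apply_ne_zero_iff.1 htc
      exact ⟨i, le_rfl, h, ht⟩
    | var j =>
      have hji := lt_of_var_mem_stmts ht
      obtain ⟨k, hkj, hk⟩ := ih j hji htc
      exact ⟨k, hkj.trans hji.le, hk⟩

theorem eq_of_var_mem_ret_of_value_ne_zero {c : C}
    (hdisj : Q.result.Pairwise fun f g => f c = 0 ∨ g c = 0)
    {i j : ℕ} (hi : Term.var i ∈ Q.ret) (hj : Term.var j ∈ Q.ret)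
    (hic : Q.value i c ≠ 0) (hjc : Q.value j c ≠ 0) : i = j := by
  by_contra hij
  rw [result, List.pairwise_map] at hdisj
  have : Std.Symm fun s t : Term C => s.eval Q.envList c = 0 ∨ t.eval Q.envList c = 0 :=
    ⟨fun _ _ => Or.symm⟩
  exact (hdisj.forall hi hj (by simpa using hij)).elim hic hjc

theorem exists_arg_eval_eq_of_length_eq_two {i : ℕ} {t : Term C} {f : C → ZMod 2}
    (hlen : (Q.stmts.getD i []).length = 2) (ht : t ∈ Q.stmts.getD i [])
    (hval : Q.value i = f + t.eval Q.envList) :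
    ∃ s ∈ Q.stmts.getD i [], s.eval Q.envList = f := by
  have hperm := List.perm_cons_erase ht
  obtain ⟨s, hs⟩ : ∃ s, (Q.stmts.getD i []).erase t = [s] := by
    rw [← List.length_eq_one_iff, List.length_erase_of_mem ht, hlen]
  rw [hs] at hperm
  refine ⟨s, hperm.mem_iff.2 (by simp), ?_⟩
  have hsum : t.eval Q.envList + s.eval Q.envList = t.eval Q.envList + f := by
    rw [add_comm _ f, ← hval, value_eq_sum, (hperm.map _).sum_eq]
    simp
  exact add_left_cancel hsum

theorem exists_lt_value_eq_of_length_eq_two {i : ℕ} {x y c : C}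
    (hlen : (Q.stmts.getD i []).length = 2) (hc : Term.const c ∈ Q.stmts.getD i [])
    (hval : Q.value i = eConst x + eConst y + eConst c) :
    ∃ j < i, Q.value j = eConst x + eConst y := by
  obtain ⟨s, hs, hsval⟩ := exists_arg_eval_eq_of_length_eq_two hlen hc hval
  cases s with
  | const d => exact absurd hsval.symm (eConst_add_eConst_ne_eConst x y d)
  | var j => exact ⟨j, lt_of_var_mem_stmts hs, hsval⟩

theorem stmts_perm_of_value_eq {i : ℕ} {r x y u v : C} (huv : u ≠ v)
    (hperm : (Q.stmts.getD i []).Perm [.const r, .const x, .const y])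
    (hval : Q.value i = eConst r + eConst u + eConst v) :
    (Q.stmts.getD i []).Perm [.const r, .const u, .const v] := by
  have hsum : eConst r + (eConst x + eConst y) = eConst r + (eConst u + eConst v) := by
    rw [← add_assoc _ (eConst u), ← hval, value_eq_sum, (hperm.map _).sum_eq]
    simp [Term.eval]
  have hxy := perm_pair_of_eConst_add_eq huv (add_left_cancel hsum)
  exact hperm.trans ((hxy.map Term.const).cons _)

theorem stmts_perm_or_freeConst {r a c : C} (hcr : c ≠ r) (hca : c ≠ a)
    (hGoal : ∀ i, i < Q.stmts.length → Term.var i ∈ Q.ret →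
      (Q.stmts.getD i []).length = 2 ∨
      ∃ x y : C, (Q.stmts.getD i []).Perm [.const r, .const x, .const y])
    (hne : ∀ i, i < Q.stmts.length → Q.value i ≠ eConst r + eConst a)
    (hdisj : Q.result.Pairwise fun f g => f c = 0 ∨ g c = 0) :
    (∀ i, i < Q.stmts.length → Term.var i ∈ Q.ret →
      Q.value i = eConst r + eConst a + eConst c →
        (Q.stmts.getD i []).Perm [.const r, .const a, .const c]) ∨
      FreeConst Q c := by
  refine or_iff_not_imp_right.2 fun hfree i hi hret hval => ?_
  rcases hGoal i hi hret with hlen | ⟨x, y, hperm⟩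
  · exfalso
    have hic : Q.value i c ≠ 0 := by simp [hval, eConst, hcr, hca]
    obtain ⟨k, hki, hkc, hmem⟩ := exists_le_const_mem_stmts hic
    have hkret : Term.var k ∈ Q.ret := by
      by_contra hk
      exact hfree ⟨k, hki.trans_lt hi, hk, hmem⟩
    obtain rfl : k = i := eq_of_var_mem_ret_of_value_ne_zero hdisj hkret hret hkc hic
    obtain ⟨j, hjk, hj⟩ := exists_lt_value_eq_of_length_eq_two hlen hmem hval
    exact hne j (hjk.trans hi) hj
  · exact stmts_perm_of_value_eq hca.symm hperm hval

end MultiSLP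

end Values

section Target

variable {N : Type} [DecidableEq N]

theorem exists_eq_of_mem_targetValues {L : List (N × N)} {nodes : List N} {f : Const N → ZMod 2}
    (hf : f ∈ targetValues L nodes) :
    ∃ x y, f = eConst Const.rho + eConst x + eConst y := by
  simp only [targetValues, List.mem_append, List.mem_map, List.mem_flatMap, List.mem_cons,
    List.not_mem_nil, or_false] at hf
  rcases hf with ⟨p, -, rfl⟩ | ⟨b, -, rfl | rfl⟩ <;> exact ⟨_, _, rfl⟩

theorem ne_rho_add_of_mem_targetValues {L : List (N × N)} {nodes : List N} {f : Const N → ZMod 2}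
    (hf : f ∈ targetValues L nodes) (c : Const N) : f ≠ eConst Const.rho + eConst c := by
  obtain ⟨x, y, rfl⟩ := exists_eq_of_mem_targetValues hf
  rw [add_assoc]
  exact fun h => eConst_add_eConst_ne_eConst x y c (add_left_cancel h)

theorem pairwise_targetValues_apply_eq_zero (L : List (N × N)) {nodes : List N}
    (hnodes : nodes.Nodup) {c : Const N} (hrho : c ≠ .rho) (hnode : ∀ b, c ≠ .node b) :
    (targetValues L nodes).Pairwise fun f g => f c = 0 ∨ g c = 0 := by
  have edge_apply (b : N) (x : Const N) :
      (eConst .rho + eConst (.node b) + eConst x : Const N → ZMod 2) c = eConst x c := by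
    simp [eConst, hrho, hnode]
  have graph_edge_apply : ∀ f ∈ L.map fun p =>
      eConst Const.rho + eConst (Const.node p.1) + eConst (Const.node p.2), f c = 0 := by
    intro f hf
    obtain ⟨p, -, rfl⟩ := List.mem_map.1 hf
    rw [edge_apply, eConst, if_neg (hnode _)]
  rw [targetValues, List.pairwise_append, List.pairwise_flatMap]
  refine ⟨?_, ⟨?_, ?_⟩, fun f hf g _ => .inl (graph_edge_apply f hf)⟩
  · exact List.pairwise_of_forall_mem_list fun f hf g _ => .inl (graph_edge_apply f hf)
  · intro b _
    simp only [List.pairwise_pair, edge_apply, eConst]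
    grind
  · refine hnodes.imp fun {b d} hbd => ?_
    simp only [List.forall_mem_cons, edge_apply, eConst]
    grind

end Target

theorem no_gamma_implies_free_general {N : Type} [DecidableEq N]
    (L : List (N × N)) (nodes : List N) (hnodesN : nodes.Nodup)
    (Q : MultiSLP (Const N)) (hQ : Q.result = targetValues L nodes)
    (hGoal : ∀ i, i < Q.stmts.length → Term.var i ∈ Q.ret →
      (Q.stmts.getD i []).length = 2 ∨
      ∃ x y : Const N,
        (Q.stmts.getD i []).Perm [Term.const Const.rho, Term.const x, Term.const y])
    (a : N)
    (hNoGamma : ∀ i, i < Q.stmts.length → Term.var i ∉ Q.ret →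
      Q.value i ≠ eConst Const.rho + eConst (Const.node a)) :
    ((∀ i, i < Q.stmts.length → Term.var i ∈ Q.ret →
        Q.value i = eConst Const.rho + eConst (Const.node a) + eConst (Const.lam a) →
        (Q.stmts.getD i []).Perm
          [Term.const Const.rho, Term.const (Const.node a), Term.const (Const.lam a)]) ∨
      FreeConst Q (Const.lam a)) ∧
    ((∀ i, i < Q.stmts.length → Term.var i ∈ Q.ret →
        Q.value i = eConst Const.rho + eConst (Const.node a) + eConst (Const.mu a) →
        (Q.stmts.getD i []).Perm
          [Term.const Const.rho, Term.const (Const.node a), Term.const (Const.mu a)]) ∨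
      FreeConst Q (Const.mu a)) := by
  have hne : ∀ i, i < Q.stmts.length →
      Q.value i ≠ eConst Const.rho + eConst (Const.node a) := by
    intro i hi
    by_cases hret : Term.var i ∈ Q.ret
    · exact ne_rho_add_of_mem_targetValues (hQ ▸ MultiSLP.value_mem_result hret) _
    · exact hNoGamma i hi hret
  have hdisj {c : Const N} (hrho : c ≠ .rho) (hnode : ∀ b, c ≠ .node b) :
      Q.result.Pairwise fun f g => f c = 0 ∨ g c = 0 :=
    hQ ▸ pairwise_targetValues_apply_eq_zero L hnodesN hrho hnode
  exact ⟨MultiSLP.stmts_perm_or_freeConst (by simp) (by simp) hGoal hne (hdisj (by simp) (by simp)),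
    MultiSLP.stmts_perm_or_freeConst (by simp) (by simp) hGoal hne (hdisj (by simp) (by simp))⟩

/-- **Proposition A1 of the appendix.**  Let `G` be a finite simple graph with node set
`N` (with `L` enumerating the edges and `nodes` enumerating `N`), let `a ∈ N`, and let
`Q` be a MultiSLP equivalent to `P_G` such that: (i) every temporal variable of `Q`
whose value is `e_x + e_y` (resp. `e_x + e_y + e_z`) for distinct constants is defined
by the statement `v ← x ⊕ y` (resp. `v ← x ⊕ y ⊕ z`); and (ii) the defining statement
of every goal variable either has exactly two arguments or is of the form
`g ← ρ ⊕ x ⊕ y` with constants `x, y`.  Suppose `Q` contains no variable `Γ_a`, i.e.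
no temporal variable with value `e_ρ + e_a`.  Then for the local node `λ_a`, either
the goal `g_{aλ_a}` is defined by the statement `g_{aλ_a} ← ρ ⊕ a ⊕ λ_a`, or the
constant `λ_a` freely appears in `Q`; and the same holds for `μ_a`. -/
theorem no_gamma_implies_free {N : Type} [Fintype N] [DecidableEq N]
    (G : SimpleGraph N) [DecidableRel G.Adj]
    (L : List (N × N)) (nodes : List N)
    (hnodesN : nodes.Nodup) (hnodesA : ∀ a : N, a ∈ nodes)
    (hLN : (L.map fun p => s(p.1, p.2)).Nodup)
    (hLadj : ∀ p ∈ L, G.Adj p.1 p.2)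
    (hLall : ∀ a b : N, G.Adj a b → s(a, b) ∈ L.map fun p => s(p.1, p.2))
    (Q : MultiSLP (Const N)) (hQ : Q.result = targetValues L nodes)
    (hTemp2 : ∀ i, i < Q.stmts.length → Term.var i ∉ Q.ret →
      ∀ x y : Const N, x ≠ y → Q.value i = eConst x + eConst y →
        (Q.stmts.getD i []).Perm [Term.const x, Term.const y])
    (hTemp3 : ∀ i, i < Q.stmts.length → Term.var i ∉ Q.ret →
      ∀ x y z : Const N, x ≠ y → x ≠ z → y ≠ z →
        Q.value i = eConst x + eConst y + eConst z →
        (Q.stmts.getD i []).Perm [Term.const x, Term.const y, Term.const z])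
    (hGoal : ∀ i, i < Q.stmts.length → Term.var i ∈ Q.ret →
      (Q.stmts.getD i []).length = 2 ∨
      ∃ x y : Const N,
        (Q.stmts.getD i []).Perm [Term.const Const.rho, Term.const x, Term.const y])
    (a : N)
    (hNoGamma : ∀ i, i < Q.stmts.length → Term.var i ∉ Q.ret →
      Q.value i ≠ eConst Const.rho + eConst (Const.node a)) :
    ((∀ i, i < Q.stmts.length → Term.var i ∈ Q.ret →
        Q.value i = eConst Const.rho + eConst (Const.node a) + eConst (Const.lam a) →
        (Q.stmts.getD i []).Perm
          [Term.const Const.rho, Term.const (Const.node a), Term.const (Const.lam a)]) ∨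
      FreeConst Q (Const.lam a)) ∧
    ((∀ i, i < Q.stmts.length → Term.var i ∈ Q.ret →
        Q.value i = eConst Const.rho + eConst (Const.node a) + eConst (Const.mu a) →
        (Q.stmts.getD i []).Perm
          [Term.const Const.rho, Term.const (Const.node a), Term.const (Const.mu a)]) ∨
      FreeConst Q (Const.mu a)) :=
  no_gamma_implies_free_general L nodes hnodesN Q hQ hGoal a hNoGamma
end

section
/- Let G be a finite simple graph, let Q be a MultiSLP equivalent to P_G, and let 𝔊 be the graph on the constants of Q built from the freely appearing constants and freely appearing goal variables of Q. For every temporal variable v of Q: (1) if the value of v is e_x + e_y for two constants x, y ∈ C \ {ρ}, then x ⇌ y in 𝔊; (2) if the value of v is e_{x_1} + e_{x_2} + e_{x_3} + e_{x_4} for four distinct constants in C \ {ρ}, then {x_1, x_2, x_3, x_4} can be partitioned into two pairs {n_1, n_2} and {n_3, n_4} with n_1 ⇌ n_2 and n_3 ⇌ n_4 in 𝔊; (3) if the value of v is e_ρ + e_x + e_y + e_z for three distinct constants x, y, z ∈ C \ {ρ}, then {x, y, z} can be split into a pair {n_1, n_2} with n_1 ⇌ n_2 in 𝔊 and a singleton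 {n_3} with n_3 ∈ 𝔊_⋆. -/
/-- A goal variable `g_{xy}` (a returned variable with value `e_ρ + e_x + e_y`)
*freely appears* in `Q` if it occurs as an argument of the defining statement of some
temporal (non-returned) variable of `Q`. -/
def FreeGoalEdge {N : Type} [DecidableEq N] (Q : MultiSLP (Const N)) (x y : Const N) :
    Prop :=
  ∃ i, i < Q.stmts.length ∧ Term.var i ∈ Q.ret ∧
    Q.value i = eConst Const.rho + eConst x + eConst y ∧
    ∃ k, k < Q.stmts.length ∧ Term.var k ∉ Q.ret ∧ Term.var i ∈ Q.stmts.getD k []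

/-- The edge relation of the graph `𝔊` on the constants of `Q`: every pair of distinct
freely appearing constants is joined, and for every freely appearing goal variable
`g_{xy}` the constants `x` and `y` are joined. -/
def GGAdj {N : Type} [DecidableEq N] (Q : MultiSLP (Const N)) (c d : Const N) : Prop :=
  c ≠ d ∧ ((FreeConst Q c ∧ FreeConst Q d) ∨ FreeGoalEdge Q c d ∨ FreeGoalEdge Q d c)

/-- `x ⇌ y`: the constants `x` and `y` are joined by a path in `𝔊`. -/
def GGConn {N : Type} [DecidableEq N] (Q : MultiSLP (Const N)) (x y : Const N) : Prop :=
  Relation.ReflTransGen (GGAdj Q) x y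

/-- `c ∈ 𝔊_⋆`: `c` lies in the connected component of `𝔊` containing the freely
appearing constants. -/
def InStar {N : Type} [DecidableEq N] (Q : MultiSLP (Const N)) (c : Const N) : Prop :=
  ∃ c₀, FreeConst Q c₀ ∧ GGConn Q c₀ c

/-
Contract `ρ` and all of `𝔊_⋆` to one base point. Extend `e_c ↦ [component of c]` linearly to
`GF(2)^C`, sending the base point to `0`. This map kills every freely appearing constant and every
freely appearing goal variable (`x` and `y` then lie in one component), hence, by induction along
`Q`, every temporal variable. So the components met by a temporal value cancel in pairs, up to
copies of the base point; in (3) the fourth constant `ρ` is itself such a copy.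
-/

section Evaluation

variable {C : Type} [DecidableEq C]

/-- The values of a list of statements. Unlike `MultiSLP.envList`, it applies to an initial segment
of the statements of a MultiSLP. -/
def evalStmts (l : List (List (Term C))) : List (C → ZMod 2) :=
  l.foldl (fun env args => env ++ [(args.map (Term.eval env)).sum]) []

theorem evalStmts_concat (l : List (List (Term C))) (args : List (Term C)) :
    evalStmts (l ++ [args]) = evalStmts l ++ [(args.map (Term.eval (evalStmts l))).sum] := by
  simp only [evalStmts, List.foldl_append, List.foldl_cons, List.foldl_nil]

theorem length_evalStmts (l : List (List (Term C))) : (evalStmts l).length = l.length := by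
  induction l using List.reverseRecOn with
  | nil => rfl
  | append_singleton l args ih => simp [evalStmts_concat, ih]

theorem evalStmts_prefix_append (l l' : List (List (Term C))) :
    evalStmts l <+: evalStmts (l ++ l') := by
  induction l' using List.reverseRecOn with
  | nil => simp
  | append_singleton l' args ih =>
    rw [← List.append_assoc, evalStmts_concat]
    exact ih.trans (List.prefix_append _ _)

theorem Term.eval_eq_of_prefix {env env' : List (C → ZMod 2)} (h : env <+: env') {t : Term C}
    (ht : ∀ j, t = Term.var j → j < env.length) : t.eval env' = t.eval env := by
  obtain ⟨rest, rfl⟩ := h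
  cases t with
  | const c => rfl
  | var j => exact List.getD_append _ _ _ _ (ht j rfl)

theorem MultiSLP.value_eq_sum_s8 (Q : MultiSLP C) {i : ℕ} (hi : i < Q.stmts.length) :
    Q.value i = ((Q.stmts.getD i []).map (Term.eval Q.envList)).sum := by
  set before := Q.stmts.take i
  set args := Q.stmts.getD i []
  have hlen : (evalStmts before).length = i := by
    rw [length_evalStmts, List.length_take, min_eq_left hi.le]
  have hsplit : Q.stmts = (before ++ [args]) ++ Q.stmts.drop (i + 1) := by
    simp [before, args, hi]
  have hprefix : evalStmts (before ++ [args]) <+: Q.envList := by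
    change _ <+: evalStmts Q.stmts
    rw [hsplit]
    exact evalStmts_prefix_append _ _
  have hargs : args.map (Term.eval Q.envList) = args.map (Term.eval (evalStmts before)) :=
    List.map_congr_left fun t ht =>
      Term.eval_eq_of_prefix ((evalStmts_prefix_append _ _).trans hprefix)
        fun j hj => hlen.symm ▸ Q.wfStmts i hi t ht j hj
  rw [hargs, MultiSLP.value]
  obtain ⟨rest, hrest⟩ := hprefix
  rw [← hrest, evalStmts_concat]
  simp [hlen]

/-- The returned variable `i` *freely appears* in `Q`: it occurs as an argument of the defining
statement of some temporal variable. -/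
def FreeReturned {C : Type} (Q : MultiSLP C) (i : ℕ) : Prop :=
  Term.var i ∈ Q.ret ∧
    ∃ k, k < Q.stmts.length ∧ Term.var k ∉ Q.ret ∧ Term.var i ∈ Q.stmts.getD k []

theorem MultiSLP.value_mem_of_forall_free_mem (Q : MultiSLP C) (S : AddSubmonoid (C → ZMod 2))
    (hconst : ∀ c, FreeConst Q c → eConst c ∈ S)
    (hreturned : ∀ i, FreeReturned Q i → Q.value i ∈ S)
    {v : ℕ} (hv : v < Q.stmts.length) (hvtemp : Term.var v ∉ Q.ret) : Q.value v ∈ S := by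
  induction v using Nat.strong_induction_on with
  | _ v ih =>
    rw [Q.value_eq_sum_s8 hv]
    refine S.list_sum_mem (List.forall_mem_map.mpr fun t ht => ?_)
    cases t with
    | const c => exact hconst c ⟨v, hv, hvtemp, ht⟩
    | var j =>
      have hj : j < v := Q.wfStmts v hv _ ht j rfl
      by_cases hret : Term.var j ∈ Q.ret
      · exact hreturned j ⟨hret, v, hv, hvtemp, ht⟩
      · exact ih j hj (hj.trans hv) hret

end Evaluation

theorem exists_linearMap_eConst {C : Type} [DecidableEq C] {V : Type*} [AddCommGroup V]
    [Module (ZMod 2) V] (g : C → V) :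
    ∃ φ : (C → ZMod 2) →ₗ[ZMod 2] V, ∀ c, φ (eConst c) = g c := by
  -- `C` may be infinite, so the `e_c` are only linearly independent, not a basis of `GF(2)^C`.
  obtain ⟨ψ, hψ⟩ := (Finsupp.lcoeFun : (C →₀ ZMod 2) →ₗ[ZMod 2] C → ZMod 2)
    |>.exists_leftInverse_of_injective (LinearMap.ker_eq_bot.mpr DFunLike.coe_injective)
  refine ⟨Finsupp.linearCombination (ZMod 2) g ∘ₗ ψ, fun c => ?_⟩
  have hc : eConst c = Finsupp.lcoeFun (R := ZMod 2) (Finsupp.single c (1 : ZMod 2)) := by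
    ext d
    simp [eConst, Finsupp.single_apply, eq_comm]
  have hψc : ψ (eConst c) = Finsupp.single c 1 := by
    rw [hc]
    exact LinearMap.congr_fun hψ _
  simp [hψc]

section Pairing

variable {ι : Type} [DecidableEq ι]

/-- The vector of a point of the pointed set `Option ι` in `GF(2)^ι`; the base point `none` goes
to `0`. -/
def pointVec (p : Option ι) : ι → ZMod 2 := p.elim 0 eConst

theorem pointVec_none : pointVec (none : Option ι) = 0 := rfl

theorem pointVec_apply (p : Option ι) (i : ι) : pointVec p i = if p = some i then 1 else 0 := by
  cases p <;> simp [pointVec, eConst, eq_comm]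

theorem pointVec_injective : Function.Injective (pointVec : Option ι → ι → ZMod 2) := by
  intro p q h
  ext i
  have hi := congrFun h i
  simp only [pointVec_apply] at hi
  grind

theorem eq_of_pointVec_add_eq_zero {p q : Option ι} (h : pointVec p + pointVec q = 0) : p = q :=
  pointVec_injective (by rwa [← ZModModule.sub_eq_add, sub_eq_zero] at h)

theorem eq_or_eq_or_eq_of_sum_pointVec_eq_zero {p q r s : Option ι}
    (h : pointVec p + pointVec q + pointVec r + pointVec s = 0) : p = q ∨ p = r ∨ p = s := by
  -- For each `i`, an even number of the four points equal `some i`.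
  have heven (i : ι) := congrFun h i
  simp only [Pi.add_apply, pointVec_apply, Pi.zero_apply] at heven
  cases p <;> cases q <;> cases r <;> cases s <;> grind

theorem pairing_of_sum_pointVec_eq_zero {p q r s : Option ι}
    (h : pointVec p + pointVec q + pointVec r + pointVec s = 0) :
    (p = q ∧ r = s) ∨ (p = r ∧ q = s) ∨ (p = s ∧ q = r) := by
  rcases eq_or_eq_or_eq_of_sum_pointVec_eq_zero h with rfl | rfl | rfl
  · refine .inl ⟨rfl, eq_of_pointVec_add_eq_zero ?_⟩
    rwa [ZModModule.add_self, zero_add] at h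
  · refine .inr (.inl ⟨rfl, eq_of_pointVec_add_eq_zero ?_⟩)
    rwa [add_right_comm (pointVec p), ZModModule.add_self, zero_add] at h
  · refine .inr (.inr ⟨rfl, eq_of_pointVec_add_eq_zero ?_⟩)
    rwa [add_comm, ← add_assoc, ← add_assoc, ZModModule.add_self, zero_add] at h

end Pairing

section Components

variable {N : Type} [DecidableEq N] {Q : MultiSLP (Const N)} {x y z : Const N}

instance GGAdj.stdSymm : Std.Symm (GGAdj Q) :=
  ⟨fun _ _ h => ⟨h.1.symm, h.2.imp And.symm Or.symm⟩⟩

theorem GGConn.refl (x : Const N) : GGConn Q x x := Relation.ReflTransGen.refl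

theorem GGConn.symm (h : GGConn Q x y) : GGConn Q y x :=
  symm_of (Relation.ReflTransGen (GGAdj Q)) h

theorem GGConn.trans (hxy : GGConn Q x y) (hyz : GGConn Q y z) : GGConn Q x z :=
  Relation.ReflTransGen.trans hxy hyz

theorem FreeConst.ggConn (hx : FreeConst Q x) (hy : FreeConst Q y) : GGConn Q x y := by
  obtain rfl | hne := eq_or_ne x y
  · exact .refl x
  · exact .single ⟨hne, .inl ⟨hx, hy⟩⟩

theorem FreeGoalEdge.ggConn (h : FreeGoalEdge Q x y) : GGConn Q x y := by
  obtain rfl | hne := eq_or_ne x y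
  · exact .refl x
  · exact .single ⟨hne, .inr (.inl h)⟩

theorem InStar.ggConn (hx : InStar Q x) (hy : InStar Q y) : GGConn Q x y := by
  obtain ⟨c, hc, hcx⟩ := hx
  obtain ⟨d, hd, hdy⟩ := hy
  exact hcx.symm.trans ((hc.ggConn hd).trans hdy)

theorem InStar.of_ggConn (hx : InStar Q x) (hxy : GGConn Q x y) : InStar Q y := by
  obtain ⟨c, hc, hcx⟩ := hx
  exact ⟨c, hc, hcx.trans hxy⟩

theorem FreeConst.inStar (hx : FreeConst Q x) : InStar Q x := ⟨x, hx, .refl x⟩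

variable (Q) in
/-- The connected components of `𝔊`, as a setoid on the constants. -/
def ggSetoid : Setoid (Const N) := ⟨GGConn Q, .refl, .symm, .trans⟩

open Classical in
variable (Q) in
/-- The component of a constant in `𝔊`, after contracting `𝔊_⋆` and the constant `ρ` to a base
point `none`. -/
noncomputable def component (c : Const N) : Option (Quotient (ggSetoid Q)) :=
  if c = Const.rho ∨ InStar Q c then none else some (Quotient.mk _ c)

theorem component_rho : component Q Const.rho = none := if_pos (.inl rfl)

theorem component_eq_none (hx : InStar Q x) : component Q x = none := if_pos (.inr hx)

theorem component_eq_none_iff (hx : x ≠ Const.rho) : component Q x = none ↔ InStar Q x := by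
  simp [component, hx]

theorem component_eq_component_iff (hx : x ≠ Const.rho) (hy : y ≠ Const.rho) :
    component Q x = component Q y ↔ GGConn Q x y := by
  have hmk : (Quotient.mk (ggSetoid Q) x = Quotient.mk _ y) ↔ GGConn Q x y := Quotient.eq
  by_cases hxs : InStar Q x <;> by_cases hys : InStar Q y
  · simp [component, hxs, hys, hxs.ggConn hys]
  · simpa [component, hy, hxs, hys] using fun h => hys (hxs.of_ggConn h)
  · simpa [component, hx, hxs, hys] using fun h => hxs (hys.of_ggConn h.symm)
  · simp [component, hx, hy, hxs, hys, hmk]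

end Components

section TemporalValues

variable {N : Type} [DecidableEq N] {Q : MultiSLP (Const N)} {v : ℕ}

/-- Every returned variable of `Q` is a goal variable: its value is `e_ρ + e_x + e_y` for some
`x` and `y` other than `ρ`. Which pairs `(x, y)` occur is left open. -/
def ReturnsGoalValues (Q : MultiSLP (Const N)) : Prop :=
  ∀ i, Term.var i ∈ Q.ret → ∃ x y : Const N, x ≠ Const.rho ∧ y ≠ Const.rho ∧
    Q.value i = eConst Const.rho + eConst x + eConst y

theorem returnsGoalValues_of_result_eq_targetValues {L : List (N × N)} {nodes : List N}
    (hQ : Q.result = targetValues L nodes) : ReturnsGoalValues Q := by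
  intro i hi
  have hmem : Q.value i ∈ targetValues L nodes := hQ ▸ List.mem_map.mpr ⟨_, hi, rfl⟩
  simp only [targetValues, List.mem_append, List.mem_map, List.mem_flatMap, List.mem_cons,
    List.not_mem_nil, or_false] at hmem
  obtain ⟨p, -, hp⟩ | ⟨a, -, ha | ha⟩ := hmem
  · exact ⟨.node p.1, .node p.2, nofun, nofun, hp.symm⟩
  · exact ⟨.node a, .lam a, nofun, nofun, ha⟩
  · exact ⟨.node a, .mu a, nofun, nofun, ha⟩

open Classical in
theorem ReturnsGoalValues.exists_linearMap_temporal_eq_zero (hQ : ReturnsGoalValues Q) :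
    ∃ φ : (Const N → ZMod 2) →ₗ[ZMod 2] (Quotient (ggSetoid Q) → ZMod 2),
      (∀ c, φ (eConst c) = pointVec (component Q c)) ∧
      ∀ v, v < Q.stmts.length → Term.var v ∉ Q.ret → φ (Q.value v) = 0 := by
  obtain ⟨φ, hφ⟩ := exists_linearMap_eConst fun c => pointVec (component Q c)
  have hconst (c : Const N) (hc : FreeConst Q c) : φ (eConst c) = 0 := by
    rw [hφ, component_eq_none hc.inStar, pointVec_none]
  have hreturned (i : ℕ) (hi : FreeReturned Q i) : φ (Q.value i) = 0 := by
    obtain ⟨hret, hused⟩ := hi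
    obtain ⟨x, y, hx, hy, hval⟩ := hQ i hret
    have hxy : FreeGoalEdge Q x y := ⟨i, Q.wfRet _ hret i rfl, hret, hval, hused⟩
    rw [hval, map_add, map_add, hφ, hφ, hφ, component_rho, pointVec_none, zero_add,
      (component_eq_component_iff hx hy).mpr hxy.ggConn, ZModModule.add_self]
  exact ⟨φ, hφ, fun v hv hvtemp =>
    Q.value_mem_of_forall_free_mem (LinearMap.ker φ).toAddSubmonoid hconst hreturned hv hvtemp⟩

theorem ReturnsGoalValues.component_eq_of_temporal (hQ : ReturnsGoalValues Q)
    (hv : v < Q.stmts.length) (hvtemp : Term.var v ∉ Q.ret) {x y : Const N}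
    (hval : Q.value v = eConst x + eConst y) : component Q x = component Q y := by
  classical
  obtain ⟨φ, hφ, hφ_temporal⟩ := hQ.exists_linearMap_temporal_eq_zero
  have hzero := hφ_temporal v hv hvtemp
  rw [hval, map_add, hφ, hφ] at hzero
  exact eq_of_pointVec_add_eq_zero hzero

theorem ReturnsGoalValues.component_pairing_of_temporal (hQ : ReturnsGoalValues Q)
    (hv : v < Q.stmts.length) (hvtemp : Term.var v ∉ Q.ret) {a b c d : Const N}
    (hval : Q.value v = eConst a + eConst b + eConst c + eConst d) :
    (component Q a = component Q b ∧ component Q c = component Q d) ∨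
      (component Q a = component Q c ∧ component Q b = component Q d) ∨
      (component Q a = component Q d ∧ component Q b = component Q c) := by
  classical
  obtain ⟨φ, hφ, hφ_temporal⟩ := hQ.exists_linearMap_temporal_eq_zero
  have hzero := hφ_temporal v hv hvtemp
  rw [hval, map_add, map_add, map_add, hφ, hφ, hφ, hφ] at hzero
  exact pairing_of_sum_pointVec_eq_zero hzero

theorem temporal_value_paths_general (hQ : ReturnsGoalValues Q)
    (hv : v < Q.stmts.length) (hvtemp : Term.var v ∉ Q.ret) :
    (∀ x y : Const N, x ≠ Const.rho → y ≠ Const.rho →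
      Q.value v = eConst x + eConst y → GGConn Q x y) ∧
    (∀ x₁ x₂ x₃ x₄ : Const N,
      x₁ ≠ Const.rho → x₂ ≠ Const.rho → x₃ ≠ Const.rho → x₄ ≠ Const.rho →
      Q.value v = eConst x₁ + eConst x₂ + eConst x₃ + eConst x₄ →
      ∃ n₁ n₂ n₃ n₄ : Const N,
        ({x₁, x₂, x₃, x₄} : Finset (Const N)) = {n₁, n₂, n₃, n₄} ∧
        GGConn Q n₁ n₂ ∧ GGConn Q n₃ n₄) ∧
    (∀ x y z : Const N, x ≠ Const.rho → y ≠ Const.rho → z ≠ Const.rho →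
      Q.value v = eConst Const.rho + eConst x + eConst y + eConst z →
      ∃ n₁ n₂ n₃ : Const N,
        ({x, y, z} : Finset (Const N)) = {n₁, n₂, n₃} ∧
        GGConn Q n₁ n₂ ∧ InStar Q n₃) := by
  refine ⟨fun x y hx hy hval => ?_, fun x₁ x₂ x₃ x₄ h₁ h₂ h₃ h₄ hval => ?_,
    fun x y z hx hy hz hval => ?_⟩
  · exact (component_eq_component_iff hx hy).mp (hQ.component_eq_of_temporal hv hvtemp hval)
  · have hpairing := hQ.component_pairing_of_temporal hv hvtemp hval
    simp only [component_eq_component_iff, h₁, h₂, h₃, h₄, ne_eq, not_false_eq_true] at hpairing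
    obtain h | h | h := hpairing
    · exact ⟨x₁, x₂, x₃, x₄, rfl, h⟩
    · exact ⟨x₁, x₃, x₂, x₄, by grind, h⟩
    · exact ⟨x₁, x₄, x₂, x₃, by grind, h⟩
  · have hpairing := hQ.component_pairing_of_temporal hv hvtemp hval
    rw [component_rho] at hpairing
    simp only [eq_comm (a := none), component_eq_none_iff, component_eq_component_iff,
      hx, hy, hz, ne_eq, not_false_eq_true] at hpairing
    obtain ⟨hstar, hconn⟩ | ⟨hstar, hconn⟩ | ⟨hstar, hconn⟩ := hpairing
    · exact ⟨y, z, x, by grind, hconn, hstar⟩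
    · exact ⟨x, z, y, by grind, hconn, hstar⟩
    · exact ⟨x, y, z, rfl, hconn, hstar⟩

end TemporalValues

/-- **Proposition A2 of the appendix.**  Let `G` be a finite simple graph (with `L`
enumerating the edges and `nodes` enumerating the node set), let `Q` be a MultiSLP
equivalent to `P_G`, and let `𝔊` be the graph on the constants of `Q` built from the
freely appearing constants and freely appearing goal variables of `Q`.  For every
temporal variable `v` of `Q`:
(1) if the value of `v` is `e_x + e_y` for two constants `x, y ≠ ρ`, then `x ⇌ y`;
(2) if the value of `v` is `e_{x₁} + e_{x₂} + e_{x₃} + e_{x₄}` for four distinct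
constants `≠ ρ`, then `{x₁,x₂,x₃,x₄}` splits into two pairs `{n₁,n₂}` and `{n₃,n₄}`
with `n₁ ⇌ n₂` and `n₃ ⇌ n₄`;
(3) if the value of `v` is `e_ρ + e_x + e_y + e_z` for three distinct constants `≠ ρ`,
then `{x,y,z}` splits into a pair `{n₁,n₂}` with `n₁ ⇌ n₂` and a point `n₃ ∈ 𝔊_⋆`. -/
theorem temporal_value_paths {N : Type} [Fintype N] [DecidableEq N]
    (G : SimpleGraph N) [DecidableRel G.Adj]
    (L : List (N × N)) (nodes : List N)
    (hnodesN : nodes.Nodup) (hnodesA : ∀ a : N, a ∈ nodes)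
    (hLN : (L.map fun p => s(p.1, p.2)).Nodup)
    (hLadj : ∀ p ∈ L, G.Adj p.1 p.2)
    (hLall : ∀ a b : N, G.Adj a b → s(a, b) ∈ L.map fun p => s(p.1, p.2))
    (Q : MultiSLP (Const N)) (hQ : Q.result = targetValues L nodes)
    (v : ℕ) (hv : v < Q.stmts.length) (hvtemp : Term.var v ∉ Q.ret) :
    (∀ x y : Const N, x ≠ Const.rho → y ≠ Const.rho → x ≠ y →
      Q.value v = eConst x + eConst y → GGConn Q x y) ∧
    (∀ x₁ x₂ x₃ x₄ : Const N,
      x₁ ≠ Const.rho → x₂ ≠ Const.rho → x₃ ≠ Const.rho → x₄ ≠ Const.rho →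
      x₁ ≠ x₂ → x₁ ≠ x₃ → x₁ ≠ x₄ → x₂ ≠ x₃ → x₂ ≠ x₄ → x₃ ≠ x₄ →
      Q.value v = eConst x₁ + eConst x₂ + eConst x₃ + eConst x₄ →
      ∃ n₁ n₂ n₃ n₄ : Const N,
        ({x₁, x₂, x₃, x₄} : Finset (Const N)) = {n₁, n₂, n₃, n₄} ∧
        GGConn Q n₁ n₂ ∧ GGConn Q n₃ n₄) ∧
    (∀ x y z : Const N, x ≠ Const.rho → y ≠ Const.rho → z ≠ Const.rho →
      x ≠ y → x ≠ z → y ≠ z →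
      Q.value v = eConst Const.rho + eConst x + eConst y + eConst z →
      ∃ n₁ n₂ n₃ : Const N,
        ({x, y, z} : Finset (Const N)) = {n₁, n₂, n₃} ∧
        GGConn Q n₁ n₂ ∧ InStar Q n₃) := by
  obtain ⟨htwo, hfour, hrho⟩ :=
    temporal_value_paths_general (returnsGoalValues_of_result_eq_targetValues hQ) hv hvtemp
  exact ⟨fun x y hx hy _ => htwo x y hx hy,
    fun x₁ x₂ x₃ x₄ h₁ h₂ h₃ h₄ _ _ _ _ _ _ => hfour x₁ x₂ x₃ x₄ h₁ h₂ h₃ h₄,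
    fun x y z hx hy hz _ _ _ => hrho x y z hx hy hz⟩
end

section
/- Let P be a MultiSLP and let 𝒲 be a winning strategy of the pebble game on the computation graph of P. Then the program Q_𝒲 obtained by forgetting the node information from 𝒲 — i.e., replacing each instruction n : p ← ⊕(p_1,…,p_k) of 𝒲 by the assignment p ← ⊕(p_1,…,p_k), where pebbles initially placed on leaves are interpreted as the corresponding constants and all other pebbles as (possibly reassigned) variables — together with the return list consisting of the pebbles resting on the goal nodes (in the order of P's return list), is a program equivalent to P: the result of Q_𝒲 equals the result of P. -/
/-- Nodes of the computation graph of a MultiSLP: leaf nodes are the constants,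
inner nodes are the variables (statement indices). -/
abbrev PNode (C : Type) := C ⊕ ℕ

/-- Pebbles: the pebbles initially placed on the leaves are named by the
corresponding constants (`Sum.inl c`); all other pebbles come from a name set `V`
(`Sum.inr p`). -/
abbrev Peb (C V : Type) := C ⊕ V

/-- A game state: the pebble (if any) currently placed on each node of the CG. -/
abbrev GState (C V : Type) := PNode C → Option (Peb C V)

/-- Initially each leaf `ℓ` carries the same-name pebble and no inner node is pebbled. -/
def initState (C V : Type) : GState C V :=
  fun n => match n with
  | Sum.inl c => some (Sum.inl c)
  | Sum.inr _ => none

/-- The child node of an inner node corresponding to an argument term. -/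
def childNode {C : Type} : Term C → PNode C
  | .const c => Sum.inl c
  | .var j => Sum.inr j

/-- An instruction `n : p ← ⊕(p₁, …, p_k)` of the pebble game: `n` is an inner node,
`p` the pebble to be placed on `n` (fresh, or moved from its current node), and
`p₁, …, p_k` the pebbles currently placed on the children of `n`. -/
structure Instr (C V : Type) where
  node : ℕ
  peb : V
  args : List (Peb C V)

/-- Remove the pebble `p` from wherever it currently is. -/
def removePeb {C V : Type} [DecidableEq C] [DecidableEq V]
    (σ : GState C V) (p : V) : GState C V :=
  fun n => if σ n = some (Sum.inr p) then none else σ n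

/-- The instruction is legal at the current position: `n` is an inner node of the CG
of `P` that has not been pebbled yet, and `p₁, …, p_k` are exactly the pebbles
currently placed on the children of `n` (in particular every child is pebbled). -/
def stepOk {C V : Type} (P : MultiSLP C) (visited : List ℕ) (σ : GState C V)
    (ins : Instr C V) : Prop :=
  ins.node < P.stmts.length ∧ ins.node ∉ visited ∧
    (P.stmts.getD ins.node []).map (fun t => σ (childNode t)) = ins.args.map some

/-- Effect of an instruction: the pebble `ins.peb` is removed from its current node
(if any, i.e. it is *moved*; otherwise it is *fresh*) and placed on `ins.node`. -/
def stepState {C V : Type} [DecidableEq C] [DecidableEq V]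
    (σ : GState C V) (ins : Instr C V) : GState C V :=
  fun n => if n = Sum.inr ins.node then some (Sum.inr ins.peb)
           else removePeb σ ins.peb n

/-- A legal play of the pebble game on the CG of `P`, starting from state `σ` with the
set `visited` of already-pebbled inner nodes (each node may be pebbled at most once). -/
def ValidPlay {C V : Type} [DecidableEq C] [DecidableEq V] (P : MultiSLP C) :
    List ℕ → GState C V → List (Instr C V) → Prop
  | _, _, [] => True
  | visited, σ, ins :: rest =>
      stepOk P visited σ ins ∧ ValidPlay P (ins.node :: visited) (stepState σ ins) rest

/-- Value of a pebble in a program environment: leaf pebbles are interpreted as the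
corresponding constants, all other pebbles as (possibly reassigned) variables. -/
def pebVal {C V : Type} [DecidableEq C] (env : V → C → ZMod 2) :
    Peb C V → C → ZMod 2
  | Sum.inl c => eConst c
  | Sum.inr v => env v

/-- Run the program `Q_𝒲` obtained from a play by forgetting the node information:
each instruction `n : p ← ⊕(p₁,…,p_k)` becomes the assignment `p ← ⊕(p₁,…,p_k)`,
where at a use site a variable takes the value of its most recent assignment. -/
def runProg {C V : Type} [DecidableEq C] [DecidableEq V]
    (stmts : List (V × List (Peb C V))) (env : V → C → ZMod 2) : V → C → ZMod 2 :=
  stmts.foldl (fun e st => Function.update e st.1 ((st.2.map (pebVal e)).sum)) env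

/-!
Forgetting the nodes is harmless because the play maintains one invariant: the variable named by
a pebble holds the value of the node on which the pebble rests. An instruction overwrites just the
variable of the pebble it places, and that pebble leaves its old node at the same moment, so no
other resting pebble is affected. The value written is the right one because legality forces the
argument pebbles to be those on the children.
-/

/-- Course-of-values recursion along a list: each entry is computed by `f` from the list of all
earlier entries and the current element. The variable values of a MultiSLP arise this way. -/
def courseOfValues {α β : Type*} (f : List β → α → β) (l : List α) : List β :=
  l.foldl (fun acc a => acc ++ [f acc a]) []

section CourseOfValues

variable {α β : Type*} (f : List β → α → β)

theorem courseOfValues_concat (l : List α) (a : α) :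
    courseOfValues f (l ++ [a]) = courseOfValues f l ++ [f (courseOfValues f l) a] := by
  simp only [courseOfValues, List.foldl_append, List.foldl_cons, List.foldl_nil]

theorem length_courseOfValues (l : List α) : (courseOfValues f l).length = l.length := by
  induction l using List.reverseRecOn with
  | nil => rfl
  | append_singleton l a ih =>
    simp only [courseOfValues_concat, List.length_append, List.length_singleton, ih]

theorem getElem_courseOfValues (l : List α) {i : ℕ} (hi : i < l.length) :
    (courseOfValues f l)[i]'(by rwa [length_courseOfValues]) =
      f ((courseOfValues f l).take i) l[i] := by
  induction l using List.reverseRecOn with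
  | nil => exact absurd hi (Nat.not_lt_zero i)
  | append_singleton l a ih =>
    simp only [courseOfValues_concat]
    have hlen := length_courseOfValues f l
    rcases Nat.lt_succ_iff_lt_or_eq.mp (by simpa using hi) with hlt | heq
    · rw [List.getElem_append_left (by rwa [hlen]), List.getElem_append_left hlt,
        List.take_append_of_le_length (by rw [hlen]; exact hlt.le), ih hlt]
    · rw [List.getElem_concat_length (by rw [hlen, heq]), List.getElem_concat_length heq,
        List.take_left' (by rw [hlen, heq])]

end CourseOfValues

theorem map_eq_map_iff_forall₂ {α β γ : Type*} {f : α → γ} {g : β → γ} {l : List α}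
    {m : List β} : l.map f = m.map g ↔ List.Forall₂ (fun a b => f a = g b) l m := by
  rw [← List.forall₂_eq_eq_eq, List.forall₂_map_left_iff, List.forall₂_map_right_iff]

theorem Term.eval_take {C : Type} [DecidableEq C] (env : List (C → ZMod 2)) {i : ℕ} {t : Term C}
    (ht : ∀ j, t = Term.var j → j < i) : Term.eval (env.take i) t = Term.eval env t := by
  cases t with
  | const c => rfl
  | var j => simp only [Term.eval, List.getD_eq_getElem?_getD, List.getElem?_take_of_lt (ht j rfl)]

namespace MultiSLP

variable {C : Type} [DecidableEq C] (P : MultiSLP C)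

theorem value_eq_sum_s10 {i : ℕ} (hi : i < P.stmts.length) :
    P.value i = ((P.stmts.getD i []).map (Term.eval P.envList)).sum := by
  let step := fun (env : List (C → ZMod 2)) (args : List (Term C)) =>
    (args.map (Term.eval env)).sum
  have henv : P.envList = courseOfValues step P.stmts := rfl
  have hi' : i < P.envList.length := by rwa [henv, length_courseOfValues]
  calc P.value i = P.envList[i] := List.getD_eq_getElem _ _ hi'
    _ = step (P.envList.take i) P.stmts[i] := getElem_courseOfValues step P.stmts hi
    _ = step (P.envList.take i) (P.stmts.getD i []) := by rw [List.getD_eq_getElem _ _ hi]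
    _ = ((P.stmts.getD i []).map (Term.eval P.envList)).sum :=
      congrArg List.sum <| List.map_congr_left fun t ht =>
        Term.eval_take P.envList (P.wfStmts i hi t ht)

/-- The value that a node of the computation graph represents. -/
def nodeValue : PNode C → C → ZMod 2 :=
  Sum.elim eConst P.value

theorem nodeValue_childNode (t : Term C) : P.nodeValue (childNode t) = Term.eval P.envList t := by
  cases t <;> rfl

end MultiSLP

section PebbleGame

variable {C V : Type} [DecidableEq C]

/-- The invariant of the pebble game: in the environment `env`, every pebble on the board has the
value that `val` assigns to the node it rests on. -/
def PebblesHold (val : PNode C → C → ZMod 2) (σ : GState C V) (env : V → C → ZMod 2) : Prop :=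
  ∀ n r, σ n = some r → pebVal env r = val n

theorem pebblesHold_initState (P : MultiSLP C) (env : V → C → ZMod 2) :
    PebblesHold P.nodeValue (initState C V) env := by
  rintro (c | i) r hr
  · cases hr
    rfl
  · cases hr

theorem pebVal_update_of_ne [DecidableEq V] (env : V → C → ZMod 2) {p : V} (x : C → ZMod 2)
    {r : Peb C V} (hr : r ≠ Sum.inr p) : pebVal (Function.update env p x) r = pebVal env r := by
  cases r with
  | inl c => rfl
  | inr v => exact Function.update_of_ne (fun hv => hr (congrArg Sum.inr hv)) x env

theorem removePeb_eq_some_iff [DecidableEq V] {σ : GState C V} {p : V} {n : PNode C}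
    {r : Peb C V} : removePeb σ p n = some r ↔ σ n = some r ∧ r ≠ Sum.inr p := by
  unfold removePeb
  split_ifs with hp <;> grind

namespace PebblesHold

variable {val : PNode C → C → ZMod 2} {σ : GState C V} {env : V → C → ZMod 2}

theorem step [DecidableEq V] (h : PebblesHold val σ env) (ins : Instr C V) :
    PebblesHold val (stepState σ ins)
      (Function.update env ins.peb (val (Sum.inr ins.node))) := by
  intro n r hr
  unfold stepState at hr
  split_ifs at hr with hn
  · cases hr
    rw [hn]
    exact Function.update_self ..
  · obtain ⟨hσ, hne⟩ := removePeb_eq_some_iff.mp hr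
    rw [pebVal_update_of_ne env _ hne, h n r hσ]

theorem sum_args_eq_nodeValue {P : MultiSLP C} (h : PebblesHold P.nodeValue σ env)
    {visited : List ℕ} {ins : Instr C V} (hok : stepOk P visited σ ins) :
    (ins.args.map (pebVal env)).sum = P.nodeValue (Sum.inr ins.node) := by
  obtain ⟨hnode, -, hargs⟩ := hok
  have hvals : (P.stmts.getD ins.node []).map (Term.eval P.envList) =
      ins.args.map (pebVal env) :=
    map_eq_map_iff_forall₂.mpr <| (map_eq_map_iff_forall₂.mp hargs).imp fun t r hr => by
      rw [h (childNode t) r hr, P.nodeValue_childNode]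
  rw [← hvals]
  exact (P.value_eq_sum_s10 hnode).symm

theorem play [DecidableEq V] {P : MultiSLP C} {visited : List ℕ}
    {W : List (Instr C V)} (h : PebblesHold P.nodeValue σ env)
    (hvalid : ValidPlay P visited σ W) :
    PebblesHold P.nodeValue (W.foldl stepState σ)
      (runProg (W.map fun ins => (ins.peb, ins.args)) env) := by
  induction W generalizing visited σ env with
  | nil => exact h
  | cons ins W ih =>
    have hstep := h.step ins
    rw [← h.sum_args_eq_nodeValue hvalid.1] at hstep
    exact ih hstep hvalid.2

end PebblesHold

theorem pebble_game_program_correct_general [DecidableEq V] (P : MultiSLP C)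
    (W : List (Instr C V)) (hvalid : ValidPlay P [] (initState C V) W)
    (R : List (Peb C V))
    (hR : List.Forall₂
      (fun (t : Term C) (r : Peb C V) =>
        (∀ c, t = Term.const c → r = Sum.inl c) ∧
        (∀ i, t = Term.var i →
          W.foldl stepState (initState C V) (Sum.inr i) = some r))
      P.ret R)
    (env : V → C → ZMod 2) :
    R.map (pebVal (runProg (W.map fun ins => (ins.peb, ins.args)) env)) = P.result := by
  have hfinal := (pebblesHold_initState P env).play hvalid
  refine (map_eq_map_iff_forall₂.mpr (hR.imp ?_)).symm
  rintro (c | i) r ⟨hconst, hvar⟩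
  · rw [hconst c rfl]
    rfl
  · exact (hfinal (Sum.inr i) r (hvar i rfl)).symm

end PebbleGame

/-- **Soundness of the pebble game (Proposition 5.2).**  Let `P` be a MultiSLP and let
`𝒲` be a winning strategy of the pebble game on the computation graph of `P` (a legal
play after which every goal node carries a pebble).  Let `R` be the return list
consisting, for each returned term of `P`, of the corresponding constant (for a
constant term) or of the pebble resting on the corresponding goal node (for a
variable term).  Then the program `Q_𝒲`, obtained by forgetting the node information
from `𝒲` and returning `R`, is equivalent to `P`: the result of `Q_𝒲` (the final
values of the returned pebbles, starting from the zero environment) equals the result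
of `P`. -/
theorem pebble_game_program_correct {C V : Type} [Fintype C] [DecidableEq C]
    [DecidableEq V]
    (P : MultiSLP C) (W : List (Instr C V))
    (hvalid : ValidPlay P [] (initState C V) W)
    (hwin : ∀ i, Term.var i ∈ P.ret →
      W.foldl stepState (initState C V) (Sum.inr i) ≠ none)
    (R : List (Peb C V))
    (hR : List.Forall₂
      (fun (t : Term C) (r : Peb C V) =>
        (∀ c, t = Term.const c → r = Sum.inl c) ∧
        (∀ i, t = Term.var i →
          W.foldl stepState (initState C V) (Sum.inr i) = some r))
      P.ret R) :
    R.map (pebVal (runProg (W.map fun ins => (ins.peb, ins.args)) fun _ _ => 0)) =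
      P.result :=
  pebble_game_program_correct_general P W hvalid R hR _
end

section
/- Let F be a field, let n, p be natural numbers, let α : Fin (n+p) → F be injective, and let V be the (n+p) × n matrix over F with entries V i j = (α i)^j (a Vandermonde coding matrix). Then for every injective map r : Fin n → Fin (n+p), the n × n submatrix M of V obtained by selecting the rows r(0), …, r(n−1) (i.e., M = V.submatrix r id) is invertible; moreover, for every data matrix D with n rows over F, decoding recovers the data: M⁻¹ * ((V * D).submatrix r id) = D. -/
open Matrix

theorem isUnit_vandermonde_iff {R : Type*} [CommRing R] {n : ℕ} {v : Fin n → R} :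
    IsUnit (vandermonde v) ↔ Pairwise fun i j ↦ IsUnit (v i - v j) := by
  rw [isUnit_iff_isUnit_det, det_vandermonde]
  simp only [IsUnit.prod_iff, Finset.mem_univ, Finset.mem_Ioi, forall_const]
  refine ⟨fun h i j hij ↦ ?_, fun h i j hij ↦ h hij.ne'⟩
  rcases hij.lt_or_gt with hlt | hgt
  · exact IsUnit.sub_iff.mp (h i j hlt)
  · exact h j i hgt

theorem submatrix_inv_mul_mul_submatrix {R m n κ : Type*} [CommRing R] [Fintype n] [DecidableEq n]
    {V : Matrix m n R} {r : n → m} (hunit : IsUnit (V.submatrix r id)) (D : Matrix n κ R) :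
    (V.submatrix r id)⁻¹ * (V * D).submatrix r id = D := by
  rw [submatrix_mul V D r id id Function.bijective_id, submatrix_id_id]
  exact nonsing_inv_mul_cancel_left _ D ((isUnit_iff_isUnit_det _).mp hunit)

theorem vandermonde_erasure_decoding_general {R ι : Type*} [CommRing R] {n : ℕ} {α : ι → R}
    {V : Matrix ι (Fin n) R} (hV : ∀ i j, V i j = α i ^ (j : ℕ)) {r : Fin n → ι}
    (hr : Pairwise fun i j ↦ IsUnit (α (r i) - α (r j))) :
    IsUnit (V.submatrix r id) ∧
    ∀ {κ : Type*} (D : Matrix (Fin n) κ R),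
      (V.submatrix r id)⁻¹ * (V * D).submatrix r id = D := by
  have hM : V.submatrix r id = vandermonde (α ∘ r) := ext fun i j ↦ hV (r i) j
  have hunit : IsUnit (V.submatrix r id) := hM ▸ isUnit_vandermonde_iff.mpr hr
  exact ⟨hunit, submatrix_inv_mul_mul_submatrix hunit⟩

/-- **Reed–Solomon decoding via Vandermonde matrices.**  Let `F` be a field, let
`α : Fin (n+p) → F` be injective, and let `V` be the `(n+p) × n` Vandermonde coding
matrix `V i j = (α i)^j`.  Then for every injective `r : Fin n → Fin (n+p)`, the
`n × n` submatrix `M = V.submatrix r id` (the rows surviving the erasures) is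
invertible, and for every data matrix `D` with `n` rows, decoding recovers the data:
`M⁻¹ * ((V * D).submatrix r id) = D`. -/
theorem vandermonde_erasure_decoding {F : Type} [Field F] (n p : ℕ)
    (α : Fin (n + p) → F) (hα : Function.Injective α)
    (V : Matrix (Fin (n + p)) (Fin n) F) (hV : ∀ i j, V i j = α i ^ (j : ℕ))
    (r : Fin n → Fin (n + p)) (hr : Function.Injective r) :
    IsUnit (V.submatrix r id) ∧
    ∀ (k : ℕ) (D : Matrix (Fin n) (Fin k) F),
      (V.submatrix r id)⁻¹ * ((V * D).submatrix r id) = D := by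
  have hunit : Pairwise fun i j ↦ IsUnit (α (r i) - α (r j)) := fun i j hij ↦
    (sub_ne_zero.mpr ((hα.comp hr).ne hij)).isUnit
  exact (vandermonde_erasure_decoding_general hV hunit).imp_right fun hdecode _ D ↦ hdecode D
end
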